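/- Let b : [0,∞) → ℝ be continuous with b(0) > 0, t0 > 0 and x0 < b(t0). Every (D2)-admissible finite nonnegative Borel measure λ on (0,t0] satisfies λ({t0}) = 0. -/

import Mathlib

open MeasureTheory Set Filter
open scoped ENNReal NNReal Topology

noncomputable def rTheta (θ t x : ℝ) : ℝ := Real.exp (-θ ^ 2 / (2 * t) + θ * x / t)

/-! An atom of `lam` at `t0` contributes `rTheta θ t0 (b t0) * lam {t0}` to the integral, while
`x0 < b t0` makes the bound `rTheta θ t0 x0` exponentially smaller than `rTheta θ t0 (b t0)` as
`θ → ∞`. -/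

section MeasureSingleton

variable {α ι : Type*} [MeasurableSpace α] [MeasurableSingletonClass α] {μ : Measure α}

lemma mul_measure_singleton_le_lintegral (f : α → ℝ≥0∞) (a : α) :
    f a * μ {a} ≤ ∫⁻ x, f x ∂μ :=
  calc
    f a * μ {a} = ∫⁻ x in {a}, f x ∂μ := (lintegral_singleton f a).symm
    _ ≤ ∫⁻ x, f x ∂μ := setLIntegral_le_lintegral {a} f

lemma measure_singleton_eq_zero_of_frequently_lintegral_le {l : Filter ι} {f : ι → α → ℝ≥0∞}
    {g : ι → ℝ≥0∞} {a : α} (hf_zero : ∀ i, f i a ≠ 0) (hf_top : ∀ i, f i a ≠ ∞)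
    (hgf : Tendsto (fun i ↦ g i / f i a) l (𝓝 0)) (hle : ∃ᶠ i in l, ∫⁻ x, f i x ∂μ ≤ g i) :
    μ {a} = 0 := by
  have measure_le_ratio : ∃ᶠ i in l, μ {a} ≤ g i / f i a := hle.mono fun i hi ↦ by
    rw [ENNReal.le_div_iff_mul_le (.inl (hf_zero i)) (.inl (hf_top i)), mul_comm]
    exact (mul_measure_singleton_le_lintegral (f i) a).trans hi
  exact nonpos_iff_eq_zero.mp (ge_of_tendsto_of_frequently hgf measure_le_ratio)

end MeasureSingleton

lemma rTheta_pos (θ t x : ℝ) : 0 < rTheta θ t x :=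
  Real.exp_pos _

lemma rTheta_div_rTheta (θ t x y : ℝ) :
    rTheta θ t x / rTheta θ t y = Real.exp (θ * ((x - y) / t)) := by
  rw [rTheta, rTheta, ← Real.exp_sub]
  ring_nf

lemma tendsto_rTheta_div_rTheta_atTop_zero {t x y : ℝ} (ht : 0 < t) (hxy : x < y) :
    Tendsto (fun θ ↦ rTheta θ t x / rTheta θ t y) atTop (𝓝 0) := by
  have hslope : (x - y) / t < 0 := div_neg_of_neg_of_pos (sub_neg.mpr hxy) ht
  simp only [rTheta_div_rTheta]
  exact Real.tendsto_exp_atBot.comp (tendsto_id.atTop_mul_const_of_neg hslope)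

theorem stmt_14_general (b : ℝ → ℝ) {t0 x0 : ℝ} (ht0 : 0 < t0) (hx0 : x0 < b t0)
    (lam : Measure ℝ)
    (hlam : ∃ᶠ θ in atTop,
      (∫⁻ t, ENNReal.ofReal (rTheta θ t (b t)) ∂lam) ≤ ENNReal.ofReal (rTheta θ t0 x0)) :
    lam {t0} = 0 := by
  have hratio : Tendsto (fun θ ↦
      ENNReal.ofReal (rTheta θ t0 x0) / ENNReal.ofReal (rTheta θ t0 (b t0))) atTop (𝓝 0) := by
    simp only [← ENNReal.ofReal_div_of_pos (rTheta_pos _ _ _)]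
    simpa only [ENNReal.ofReal_zero] using
      ENNReal.tendsto_ofReal (tendsto_rTheta_div_rTheta_atTop_zero ht0 hx0)
  exact measure_singleton_eq_zero_of_frequently_lintegral_le
    (f := fun θ t ↦ ENNReal.ofReal (rTheta θ t (b t)))
    (fun θ ↦ (ENNReal.ofReal_pos.mpr (rTheta_pos θ t0 (b t0))).ne')
    (fun _ ↦ ENNReal.ofReal_ne_top) hratio hlam

theorem stmt_14 (b : ℝ → ℝ) (hbcont : ContinuousOn b (Set.Ici 0)) (hb0 : 0 < b 0)
    (t0 x0 : ℝ) (ht0 : 0 < t0) (hx0 : x0 < b t0)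
    (lam : Measure ℝ) [IsFiniteMeasure lam] (hlamsupp : lam (Set.Ioc 0 t0)ᶜ = 0)
    (hlamadm : ∀ θ ∈ Set.Ici (2 * b 0),
      (∫⁻ t, ENNReal.ofReal (rTheta θ t (b t)) ∂lam) ≤ ENNReal.ofReal (rTheta θ t0 x0)) :
    lam {t0} = 0 :=
  stmt_14_general b ht0 hx0 lam ((eventually_ge_atTop (2 * b 0)).mono hlamadm).frequently
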